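/- There exists an absolute constant C > 0 such that for every ε ∈ (0,1), every δ ∈ (0, √(log(1 + ε/(1−ε)))), every τ ∈ (0,1), and every positive integer n with n ≥ exp(C·((1/δ)·log(1 + ε/(1−ε)))²)·log(1/τ)/(ε²·(1−ε)), there exists a measurable function A : (ℝ ∪ {⊥})ⁿ → ℝ such that for every μ ∈ ℝ and every ε-corrupted version Q of N(μ,1), Pr_{(x₁,…,xₙ)∼Q^⊗n}[|A(x₁,…,xₙ) − μ| ≤ δ] ≥ 1 − τ. -/

import Mathlib

open MeasureTheory

/-- Measurable space structure on `Option α`: a set is measurable iff its preimage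
under `some` is measurable. -/
instance optionMeasurableSpace {α : Type*} [m : MeasurableSpace α] :
    MeasurableSpace (Option α) := m.map some

/-- The probability density function of the standard Gaussian `N(0,1)`. -/
noncomputable def gaussPDF (x : ℝ) : ℝ := Real.exp (-x ^ 2 / 2) / Real.sqrt (2 * Real.pi)

/-- `Q` is an `ε`-corrupted version (realizable `ε`-contamination model) of the
distribution on `ℝ` with density `p`. -/
def IsCorruptedVersion (ε : ℝ) (p : ℝ → ℝ) (Q : Measure (Option ℝ)) : Prop :=
  IsProbabilityMeasure Q ∧
  ∃ f : ℝ → ℝ, Measurable f ∧ (∀ x : ℝ, (1 - ε) * p x ≤ f x ∧ f x ≤ p x) ∧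
    (∀ A : Set ℝ, MeasurableSet A → Q (Option.some '' A) = ENNReal.ofReal (∫ x in A, f x)) ∧
    Q {none} = ENNReal.ofReal (1 - ∫ x : ℝ, f x)

/-! Let `L = log (1 / (1 - ε))` and `y = L / (2 * s) + 1`. The tails of `N(μ, 1)` at `μ + y - s` and
`μ + y + s` differ by a factor of at least `exp (2 * s) / (1 - ε)`, so an `ε`-corruption, which
lowers a tail by a factor of at most `1 - ε`, cannot close the gap between them. The empirical upper
quantile at a level inside this gap, minus `y`, is therefore `s`-accurate once the empirical tails
are accurate, which by Hoeffding's inequality fails with probability at most `2 * exp (-(ρ s * n))`.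

This settles `s = δ` for large `n`. When `r = ρ δ * n` is small, the failure bound is useless, but
success probability of order `(1 - ε) * r` is enough. If `min 1 δ` is of order `r` or more, a single
sample reaches it. Otherwise the quantile estimator finds `μ` to within `s = 4 * δ / r` with
probability `1 / 2`, because `ρ` grows at least quadratically; averaging with weight `s` with one
more sample then hits the window `[μ - δ, μ + δ]` with probability of order
`(1 - ε) * δ / s`. -/

open ProbabilityTheory

section ProductMeasures

variable {α β : Type*} [MeasurableSpace α] [MeasurableSpace β]

lemma mul_measureReal_le_measureReal_prod {μ : Measure α} {ν : Measure β} [IsFiniteMeasure μ]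
    [IsFiniteMeasure ν] {S : Set (α × β)} (hS : MeasurableSet S) {E : Set β}
    (hE : MeasurableSet E) {c : ℝ} (hc : 0 ≤ c)
    (h : ∀ y ∈ E, c ≤ μ.real {x | (x, y) ∈ S}) :
    c * ν.real E ≤ (μ.prod ν).real S := by
  have hsection : ∀ y ∈ E, ENNReal.ofReal c ≤ μ ((fun x ↦ (x, y)) ⁻¹' S) := fun y hy ↦
    (ENNReal.ofReal_le_iff_le_toReal (measure_ne_top _ _)).2 (h y hy)
  have hprod : ENNReal.ofReal c * ν E ≤ (μ.prod ν) S :=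
    calc ENNReal.ofReal c * ν E = ∫⁻ _ in E, ENNReal.ofReal c ∂ν := (setLIntegral_const _ _).symm
      _ ≤ ∫⁻ y in E, μ ((fun x ↦ (x, y)) ⁻¹' S) ∂ν := setLIntegral_mono' hE hsection
      _ ≤ ∫⁻ y, μ ((fun x ↦ (x, y)) ⁻¹' S) ∂ν := setLIntegral_le_lintegral _ _
      _ = (μ.prod ν) S := (Measure.prod_apply_symm hS).symm
  simpa only [ENNReal.toReal_mul, ENNReal.toReal_ofReal hc, Measure.real] using
    ENNReal.toReal_mono (measure_ne_top _ _) hprod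

lemma measureReal_pi_succ_eq_measureReal_prod (Q : Measure α) [IsProbabilityMeasure Q] (k : ℕ)
    {S : Set (α × (Fin k → α))} (hS : MeasurableSet S) :
    (Measure.pi fun _ : Fin (k + 1) ↦ Q).real {v | (v 0, Fin.tail v) ∈ S} =
      (Q.prod (Measure.pi fun _ : Fin k ↦ Q)).real S :=
  (measurePreserving_piFinSuccAbove (fun _ : Fin (k + 1) ↦ Q) 0).measureReal_preimage
    hS.nullMeasurableSet

end ProductMeasures

section Hoeffding

variable {ι α : Type*} [Fintype ι]

/-- The number of entries of the sample `v` that lie in `S`, as a real number. -/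
noncomputable def sampleCount (S : Set α) (v : ι → α) : ℝ := ∑ i, S.indicator 1 (v i)

lemma sampleCount_mono {S T : Set α} (h : S ⊆ T) (v : ι → α) :
    sampleCount S v ≤ sampleCount T v :=
  Finset.sum_le_sum fun _ _ ↦
    Set.indicator_le_indicator_of_subset h (fun _ ↦ zero_le_one) _

variable [MeasurableSpace α]

lemma measureReal_pi_card_mul_le_sum_le (Q : Measure α) [IsProbabilityMeasure Q] {X : α → ℝ}
    (hX : Measurable X) {a b : ℝ} (hab : ∀ x, X x ∈ Set.Icc a b) {t : ℝ} (ht : 0 ≤ t) :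
    (Measure.pi fun _ : ι ↦ Q).real {v | Fintype.card ι * (∫ x, X x ∂Q + t) ≤ ∑ i, X (v i)} ≤
      Real.exp (-(2 * Fintype.card ι * t ^ 2 / (b - a) ^ 2)) := by
  set Y : α → ℝ := fun x ↦ X x - ∫ x, X x ∂Q with hY
  have hY_subgaussian : HasSubgaussianMGF Y ((‖b - a‖₊ / 2) ^ 2) Q :=
    hasSubgaussianMGF_of_mem_Icc hX.aemeasurable (.of_forall hab)
  have hcoord (i : ι) : HasSubgaussianMGF (fun v : ι → α ↦ Y (v i)) ((‖b - a‖₊ / 2) ^ 2)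
      (Measure.pi fun _ : ι ↦ Q) := by
    have heval := measurePreserving_eval (fun _ : ι ↦ Q) i
    refine HasSubgaussianMGF.of_map (X := Y) heval.measurable.aemeasurable ?_
    rwa [heval.map_eq]
  have hindep : iIndepFun (fun (i : ι) (v : ι → α) ↦ Y (v i)) (Measure.pi fun _ : ι ↦ Q) :=
    iIndepFun_pi (X := fun _ ↦ Y) fun _ ↦ (hX.sub_const _).aemeasurable
  have hevent : {v : ι → α | Fintype.card ι * (∫ x, X x ∂Q + t) ≤ ∑ i, X (v i)} =
      {v | Fintype.card ι * t ≤ ∑ i, Y (v i)} := by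
    ext v
    simp only [hY, Set.mem_ofPred_eq, Finset.sum_sub_distrib, Finset.sum_const, Finset.card_univ,
      nsmul_eq_mul, mul_add, le_sub_iff_add_le']
  rw [hevent]
  refine (HasSubgaussianMGF.measure_sum_ge_le_of_iIndepFun hindep (fun i _ ↦ hcoord i)
    (by positivity)).trans_eq ?_
  congr 1
  simp only [Finset.sum_const, Finset.card_univ, nsmul_eq_mul, NNReal.coe_mul, NNReal.coe_natCast,
    NNReal.coe_pow, NNReal.coe_div, coe_nnnorm, Real.norm_eq_abs, NNReal.coe_ofNat, div_pow, sq_abs]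
  rcases eq_or_ne (Fintype.card ι : ℝ) 0 with hcard | hcard
  · simp [hcard]
  rcases eq_or_ne (b - a) 0 with hba | hba
  · simp [hba]
  field_simp

lemma measurable_sampleCount {S : Set α} (hS : MeasurableSet S) :
    Measurable (sampleCount S : (ι → α) → ℝ) :=
  Finset.measurable_sum _ fun i _ ↦
    (measurable_one.indicator hS).comp (measurable_pi_apply i)

lemma measureReal_le_sampleCount_le (Q : Measure α) [IsProbabilityMeasure Q] {S : Set α}
    (hS : MeasurableSet S) {t : ℝ} (ht : 0 ≤ t) :
    (Measure.pi fun _ : ι ↦ Q).real {v | Fintype.card ι * (Q.real S + t) ≤ sampleCount S v} ≤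
      Real.exp (-(2 * Fintype.card ι * t ^ 2)) := by
  have hbound (x : α) : S.indicator (1 : α → ℝ) x ∈ Set.Icc 0 1 := by
    by_cases hx : x ∈ S <;> simp [hx]
  simpa [sampleCount, integral_indicator_one hS] using
    measureReal_pi_card_mul_le_sum_le (ι := ι) Q (measurable_one.indicator hS) hbound ht

lemma measureReal_sampleCount_le_le (Q : Measure α) [IsProbabilityMeasure Q] {S : Set α}
    (hS : MeasurableSet S) {t : ℝ} (ht : 0 ≤ t) :
    (Measure.pi fun _ : ι ↦ Q).real {v | sampleCount S v ≤ Fintype.card ι * (Q.real S - t)} ≤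
      Real.exp (-(2 * Fintype.card ι * t ^ 2)) := by
  have hbound (x : α) : -S.indicator (1 : α → ℝ) x ∈ Set.Icc (-1) 0 := by
    by_cases hx : x ∈ S <;> simp [hx]
  have h :=
    measureReal_pi_card_mul_le_sum_le (ι := ι) Q (measurable_one.indicator hS).neg hbound ht
  simp only [Pi.neg_apply, integral_neg, integral_indicator_one hS, Finset.sum_neg_distrib] at h
  convert h using 3
  · ext v
    simp only [sampleCount]
    constructor <;> intro hv <;> linarith
  · norm_num

end Hoeffding

section EmpiricalQuantile

variable {ι : Type*} [Fintype ι]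

lemma measurableSet_image_some {α : Type*} [MeasurableSpace α] {A : Set α}
    (hA : MeasurableSet A) : MeasurableSet (some '' A) := by
  change MeasurableSet (some ⁻¹' (some '' A))
  rwa [Set.preimage_image_eq _ (Option.some_injective _)]

open Classical in
/-- The `q`-upper quantile of a sample: the supremum of the thresholds exceeded by at least a
fraction `q` of the entries, where `⊥` exceeds no threshold. The supremum runs over rational
thresholds, which makes it measurable in the sample, and is taken in `EReal`; the value is `0`
if it is infinite. -/
noncomputable def upperQuantile (q : ℝ) (v : ι → Option ℝ) : ℝ :=
  (⨆ r : ℚ, if Fintype.card ι * q ≤ sampleCount (some '' Set.Ioi (r : ℝ)) v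
    then ((r : ℝ) : EReal) else ⊥).toReal

lemma measurable_upperQuantile (q : ℝ) :
    Measurable (upperQuantile q : (ι → Option ℝ) → ℝ) :=
  measurable_ereal_toReal.comp <| .iSup fun _ ↦
    .ite (measurableSet_le measurable_const
      (measurable_sampleCount (measurableSet_image_some measurableSet_Ioi)))
      measurable_const measurable_const

lemma upperQuantile_mem_Icc {q a b : ℝ} {v : ι → Option ℝ}
    (ha : Fintype.card ι * q ≤ sampleCount (some '' Set.Ioi a) v)
    (hb : sampleCount (some '' Set.Ioi b) v < Fintype.card ι * q) :
    upperQuantile q v ∈ Set.Icc a b := by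
  classical
  have hcount {r s : ℝ} (hrs : r ≤ s) :
      sampleCount (some '' Set.Ioi s) v ≤ sampleCount (some '' Set.Ioi r) v :=
    sampleCount_mono (Set.image_mono (Set.Ioi_subset_Ioi hrs)) v
  set M : EReal := ⨆ r : ℚ, if Fintype.card ι * q ≤ sampleCount (some '' Set.Ioi (r : ℝ)) v
    then ((r : ℝ) : EReal) else ⊥
  have hMb : M ≤ b := iSup_le fun r ↦ by
    split_ifs with hr
    · refine EReal.coe_le_coe_iff.2 (le_of_not_gt fun hbr ↦ ?_)
      exact ((hr.trans (hcount hbr.le)).trans_lt hb).false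
    · exact bot_le
  have haM : a ≤ M := le_of_forall_lt fun c hc ↦ by
    obtain ⟨r, hcr, hra⟩ := EReal.lt_iff_exists_rat_btwn.1 hc
    refine hcr.trans_le (le_iSup_of_le r ?_)
    rw [if_pos (ha.trans (hcount (EReal.coe_lt_coe_iff.1 hra).le))]
  have hM : ((M.toReal : ℝ) : EReal) = M :=
    EReal.coe_toReal (ne_top_of_le_ne_top (EReal.coe_ne_top b) hMb)
      (ne_bot_of_le_ne_bot (EReal.coe_ne_bot a) haM)
  rw [← hM] at hMb haM
  exact ⟨EReal.coe_le_coe_iff.1 haM, EReal.coe_le_coe_iff.1 hMb⟩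

lemma le_measureReal_upperQuantile_mem_Icc (Q : Measure (Option ℝ)) [IsProbabilityMeasure Q]
    {q t a b : ℝ} (ht : 0 ≤ t) (ha : q + t ≤ Q.real (some '' Set.Ioi a))
    (hb : Q.real (some '' Set.Ioi b) ≤ q - t) :
    1 - 2 * Real.exp (-(2 * Fintype.card ι * t ^ 2)) ≤
      (Measure.pi fun _ : ι ↦ Q).real {v | upperQuantile q v ∈ Set.Icc a b} := by
  set P := Measure.pi fun _ : ι ↦ Q
  set low := {v : ι → Option ℝ |
    sampleCount (some '' Set.Ioi a) v ≤ Fintype.card ι * (Q.real (some '' Set.Ioi a) - t)}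
  set high := {v : ι → Option ℝ |
    Fintype.card ι * (Q.real (some '' Set.Ioi b) + t) ≤ sampleCount (some '' Set.Ioi b) v}
  have hgood : MeasurableSet {v : ι → Option ℝ | upperQuantile q v ∈ Set.Icc a b} :=
    measurable_upperQuantile q measurableSet_Icc
  have hbad : {v : ι → Option ℝ | upperQuantile q v ∈ Set.Icc a b}ᶜ ⊆ low ∪ high := by
    refine Set.compl_subset_comm.1 fun v hv ↦ ?_
    simp only [low, high, Set.mem_compl_iff, Set.mem_union, Set.mem_ofPred_eq, not_or,
      not_le] at hv
    refine upperQuantile_mem_Icc (le_trans ?_ hv.1.le) (hv.2.trans_le ?_) <;> gcongr <;> linarith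
  have hunion : P.real (low ∪ high) ≤ 2 * Real.exp (-(2 * Fintype.card ι * t ^ 2)) := by
    refine (measureReal_union_le _ _).trans ?_
    rw [two_mul]
    exact add_le_add
      (measureReal_sampleCount_le_le Q (measurableSet_image_some measurableSet_Ioi) ht)
      (measureReal_le_sampleCount_le Q (measurableSet_image_some measurableSet_Ioi) ht)
  have hcompl := (measureReal_mono hbad (μ := P)).trans hunion
  rw [probReal_compl_eq_one_sub hgood] at hcompl
  linarith

end EmpiricalQuantile

section GaussianTail

lemma gaussPDF_eq_gaussianPDFReal : gaussPDF = gaussianPDFReal 0 1 := by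
  funext x
  simp only [gaussPDF, gaussianPDFReal, sub_zero, NNReal.coe_one, mul_one]
  ring

lemma gaussPDF_nonneg (x : ℝ) : 0 ≤ gaussPDF x := by
  rw [gaussPDF_eq_gaussianPDFReal]
  exact gaussianPDFReal_nonneg 0 1 x

lemma integrable_gaussPDF : Integrable gaussPDF := by
  rw [gaussPDF_eq_gaussianPDFReal]
  exact integrable_gaussianPDFReal 0 1

lemma exp_le_gaussPDF {x r : ℝ} (h : |x| ≤ r) : Real.exp (-r ^ 2 / 2 - 1) ≤ gaussPDF x := by
  have hsq : x ^ 2 ≤ r ^ 2 := sq_le_sq.2 (h.trans (le_abs_self r))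
  have hsqrt : √(2 * Real.pi) ≤ Real.exp 1 := by
    rw [Real.sqrt_le_left (Real.exp_pos 1).le]
    nlinarith [Real.exp_one_gt_d9, Real.pi_lt_d2]
  rw [gaussPDF, Real.exp_sub]
  gcongr

/-- The upper tail `P(Z > y)` of a standard Gaussian variable `Z`. -/
noncomputable def gaussTail (y : ℝ) : ℝ := ∫ x in Set.Ioi y, gaussPDF x

lemma setIntegral_Ioi_gaussPDF_sub (a m : ℝ) :
    ∫ x in Set.Ioi a, gaussPDF (x - m) = gaussTail (a - m) := by
  rw [gaussTail, ← integral_indicator measurableSet_Ioi, ← integral_indicator measurableSet_Ioi,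
    ← integral_sub_right_eq_self ((Set.Ioi (a - m)).indicator gaussPDF) m]
  simp only [Set.indicator, Set.mem_Ioi, sub_lt_sub_iff_right]

lemma setIntegral_gaussPDF_mono {A B : Set ℝ} (h : A ⊆ B) :
    ∫ x in A, gaussPDF x ≤ ∫ x in B, gaussPDF x :=
  setIntegral_mono_set integrable_gaussPDF.integrableOn (.of_forall gaussPDF_nonneg)
    h.eventuallyLE

lemma gaussTail_antitone : Antitone gaussTail := fun _ _ h ↦
  setIntegral_gaussPDF_mono (Set.Ioi_subset_Ioi h)

lemma exp_le_gaussTail {y : ℝ} (hy : 0 ≤ y) :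
    Real.exp (-(y + 1) ^ 2 / 2 - 1) ≤ gaussTail y := by
  have hdensity : ∀ x ∈ Set.Ioc y (y + 1), Real.exp (-(y + 1) ^ 2 / 2 - 1) ≤ gaussPDF x :=
    fun x hx ↦ exp_le_gaussPDF (abs_le.2 ⟨by linarith [hx.1], hx.2⟩)
  have hIoc := setIntegral_ge_of_const_le_real measurableSet_Ioc (by simp) hdensity
    integrable_gaussPDF.integrableOn
  rw [Real.volume_real_Ioc_of_le (by simp), add_sub_cancel_left, mul_one] at hIoc
  exact hIoc.trans (setIntegral_gaussPDF_mono Set.Ioc_subset_Ioi_self)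

lemma gaussTail_add_le_exp_mul_gaussTail_sub (y : ℝ) {s : ℝ} (hs : 0 ≤ s) :
    gaussTail (y + s) ≤ Real.exp (-(2 * s * y)) * gaussTail (y - s) := by
  rw [show y - s = y + s - 2 * s by ring, ← setIntegral_Ioi_gaussPDF_sub, gaussTail,
    ← integral_const_mul]
  refine setIntegral_mono_on integrable_gaussPDF.integrableOn
    ((integrable_gaussPDF.comp_sub_right _).const_mul _).integrableOn measurableSet_Ioi
    fun x hx ↦ ?_
  have hx : y + s < x := hx
  rw [gaussPDF, gaussPDF, ← mul_div_assoc, ← Real.exp_add]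
  gcongr
  nlinarith

end GaussianTail

namespace IsCorruptedVersion

lemma measureReal_image_some_mem_Icc {ε : ℝ} {p : ℝ → ℝ} {Q : Measure (Option ℝ)}
    (hQ : IsCorruptedVersion ε p Q) (hε : ε ≤ 1) (hp : ∀ x, 0 ≤ p x) (hp_int : Integrable p)
    {A : Set ℝ} (hA : MeasurableSet A) :
    Q.real (some '' A) ∈ Set.Icc ((1 - ε) * ∫ x in A, p x) (∫ x in A, p x) := by
  obtain ⟨_, f, hf_meas, hf, hfQ, _⟩ := hQ
  have hf_nonneg (x : ℝ) : 0 ≤ f x := (mul_nonneg (sub_nonneg.2 hε) (hp x)).trans (hf x).1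
  have hf_int : Integrable f :=
    hp_int.mono' hf_meas.aestronglyMeasurable <| .of_forall fun x ↦
      (Real.norm_of_nonneg (hf_nonneg x)).trans_le (hf x).2
  rw [Measure.real, hfQ A hA, ENNReal.toReal_ofReal (integral_nonneg hf_nonneg),
    ← integral_const_mul]
  exact ⟨setIntegral_mono (hp_int.const_mul _).integrableOn hf_int.integrableOn fun x ↦ (hf x).1,
    setIntegral_mono hf_int.integrableOn hp_int.integrableOn fun x ↦ (hf x).2⟩

variable {ε m : ℝ} {Q : Measure (Option ℝ)}

lemma measureReal_image_some_Ioi_mem_Icc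
    (hQ : IsCorruptedVersion ε (fun x ↦ gaussPDF (x - m)) Q) (hε : ε ≤ 1) (y : ℝ) :
    Q.real (some '' Set.Ioi (m + y)) ∈ Set.Icc ((1 - ε) * gaussTail y) (gaussTail y) := by
  have h := hQ.measureReal_image_some_mem_Icc hε (fun _ ↦ gaussPDF_nonneg _)
    (integrable_gaussPDF.comp_sub_right m) (measurableSet_Ioi (a := m + y))
  rwa [setIntegral_Ioi_gaussPDF_sub, add_sub_cancel_left] at h

lemma le_measureReal_image_some_Icc
    (hQ : IsCorruptedVersion ε (fun x ↦ gaussPDF (x - m)) Q) (hε : ε ≤ 1) {c r : ℝ}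
    (hc : |c - m| ≤ 1) (hr : 0 ≤ r) (hr1 : r ≤ 1) :
    (1 - ε) * (2 * r * Real.exp (-3)) ≤ Q.real (some '' Set.Icc (c - r) (c + r)) := by
  have hint : Integrable fun x ↦ gaussPDF (x - m) := integrable_gaussPDF.comp_sub_right m
  refine le_trans (mul_le_mul_of_nonneg_left ?_ (sub_nonneg.2 hε))
    (hQ.measureReal_image_some_mem_Icc hε (fun _ ↦ gaussPDF_nonneg _) hint measurableSet_Icc).1
  have hdensity : ∀ x ∈ Set.Icc (c - r) (c + r), Real.exp (-3) ≤ gaussPDF (x - m) := by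
    intro x hx
    have hxm : |x - m| ≤ 2 := by
      rw [abs_le] at hc ⊢
      constructor <;> linarith [hx.1, hx.2]
    convert exp_le_gaussPDF hxm using 2
    norm_num
  have hIcc := setIntegral_ge_of_const_le_real measurableSet_Icc (by simp) hdensity
    hint.integrableOn
  rw [Real.volume_real_Icc_of_le (by linarith)] at hIcc
  linarith

end IsCorruptedVersion

section QuantileRate

/-- The largest log-likelihood ratio `log (1 / (1 - ε))` between a density and its
`ε`-corrupted versions, in the form in which the sample complexity bound uses it. -/
noncomputable def logRatio (ε : ℝ) : ℝ := Real.log (1 + ε / (1 - ε))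

lemma exp_neg_logRatio {ε : ℝ} (hε : ε < 1) : Real.exp (-logRatio ε) = 1 - ε := by
  have hpos : 0 < 1 - ε := sub_pos.2 hε
  rw [logRatio, show 1 + ε / (1 - ε) = (1 - ε)⁻¹ by field_simp; ring, Real.log_inv, neg_neg,
    Real.exp_log hpos]

lemma le_logRatio {ε : ℝ} (hε : ε < 1) : ε ≤ logRatio ε := by
  linarith [Real.one_sub_le_exp_neg (logRatio ε), exp_neg_logRatio hε]

/-- The distance above the mean of the quantile that estimates it to accuracy `s`. The tails of
`N(0, 1)` at `quantileShift ε s ± s` differ by a factor of at least `exp (2 * s) / (1 - ε)`. -/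
noncomputable def quantileShift (ε s : ℝ) : ℝ := logRatio ε / (2 * s) + 1

/-- Lower bound for the gap between the smallest probability of exceeding
`μ + quantileShift ε s - s` and the largest probability of exceeding
`μ + quantileShift ε s + s` under `ε`-corrupted versions of `N(μ, 1)`. -/
noncomputable def quantileGap (ε s : ℝ) : ℝ :=
  (1 - ε) * (min 1 s / 2) * Real.exp (-(logRatio ε / s) ^ 2 / 4 - 5)

/-- Exponent `ρ` of the failure probability `2 * exp (-(ρ * n))` of the quantile estimator with
`n` samples and accuracy `s`. -/
noncomputable def quantileRate (ε s : ℝ) : ℝ := quantileGap ε s ^ 2 / 2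

lemma min_one_half_le_one_sub_exp_neg {s : ℝ} (hs : 0 ≤ s) :
    min 1 s / 2 ≤ 1 - Real.exp (-(2 * s)) := by
  set d := min 1 s
  have hd0 : 0 ≤ d := le_min zero_le_one hs
  have hd1 : d ≤ 1 := min_le_left _ _
  have hexp : Real.exp (-(2 * s)) ≤ (1 + 2 * d)⁻¹ := by
    rw [Real.exp_neg]
    gcongr
    linarith [Real.add_one_le_exp (2 * s), min_le_right 1 s]
  have hinv : (1 + 2 * d)⁻¹ ≤ 1 - d / 2 := by
    rw [inv_le_iff_one_le_mul₀ (by linarith)]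
    nlinarith
  linarith

variable {ε s : ℝ}

lemma quantileGap_nonneg (hε : ε ≤ 1) (hs : 0 ≤ s) : 0 ≤ quantileGap ε s := by
  have := sub_nonneg.2 hε
  unfold quantileGap
  positivity

lemma quantileGap_le_one (hε : ε ∈ Set.Ioo 0 1) (hs : 0 ≤ s) : quantileGap ε s ≤ 1 := by
  refine mul_le_one₀ (mul_le_one₀ ?_ (by positivity) ?_) (Real.exp_pos _).le
    (Real.exp_le_one_iff.2 ?_)
  · linarith [hε.1]
  · linarith [min_le_left 1 s]
  · nlinarith

lemma quantileRate_le_one (hε : ε ∈ Set.Ioo 0 1) (hs : 0 ≤ s) : quantileRate ε s ≤ 1 := by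
  have h := pow_le_one₀ (n := 2) (quantileGap_nonneg hε.2.le hs) (quantileGap_le_one hε hs)
  unfold quantileRate
  linarith

lemma exp_le_gaussTail_quantileShift_sub (hε : ε ∈ Set.Ioo 0 1) (hs : 0 < s) :
    Real.exp (-(logRatio ε / s) ^ 2 / 4 - 5) ≤ gaussTail (quantileShift ε s - s) := by
  have hL : 0 < logRatio ε := hε.1.trans_le (le_logRatio hε.2)
  have hshift : quantileShift ε s = logRatio ε / s / 2 + 1 := by
    rw [quantileShift, div_div, mul_comm]
  calc Real.exp (-(logRatio ε / s) ^ 2 / 4 - 5)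
      ≤ Real.exp (-(quantileShift ε s + 1) ^ 2 / 2 - 1) := by
        rw [hshift, Real.exp_le_exp]
        nlinarith [sq_nonneg (logRatio ε / s - 4)]
    _ ≤ gaussTail (quantileShift ε s) := exp_le_gaussTail (by rw [hshift]; positivity)
    _ ≤ gaussTail (quantileShift ε s - s) := gaussTail_antitone (by linarith)

lemma gaussTail_quantileShift_add_le (hε : ε < 1) (hs : 0 < s) :
    gaussTail (quantileShift ε s + s) ≤
      (1 - ε) * Real.exp (-(2 * s)) * gaussTail (quantileShift ε s - s) := by
  convert gaussTail_add_le_exp_mul_gaussTail_sub (quantileShift ε s) hs.le using 2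
  rw [← exp_neg_logRatio hε, ← Real.exp_add, quantileShift]
  congr 1
  field_simp
  ring

lemma quantileGap_le (hε : ε ∈ Set.Ioo 0 1) (hs : 0 < s) :
    quantileGap ε s ≤
      (1 - ε) * gaussTail (quantileShift ε s - s) - gaussTail (quantileShift ε s + s) := by
  have hε' : 0 ≤ 1 - ε := sub_nonneg.2 hε.2.le
  have hd := min_one_half_le_one_sub_exp_neg hs.le
  calc quantileGap ε s
      ≤ (1 - ε) * (1 - Real.exp (-(2 * s))) * gaussTail (quantileShift ε s - s) := by
        unfold quantileGap
        gcongr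
        · exact mul_nonneg hε' (hd.trans' (by positivity))
        · exact exp_le_gaussTail_quantileShift_sub hε hs
    _ = (1 - ε) * gaussTail (quantileShift ε s - s) -
          (1 - ε) * Real.exp (-(2 * s)) * gaussTail (quantileShift ε s - s) := by ring
    _ ≤ _ := sub_le_sub_left (gaussTail_quantileShift_add_le hε.2 hs) _

lemma div_sq_mul_quantileRate_le {δ : ℝ} (hε : ε ∈ Set.Ioo 0 1) (hδ : 0 < δ) (hδs : δ ≤ s)
    (hs : s ≤ 1) : (s / δ) ^ 2 * quantileRate ε δ ≤ quantileRate ε s := by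
  have hs0 : 0 < s := hδ.trans_le hδs
  have hε' : 0 ≤ 1 - ε := sub_nonneg.2 hε.2.le
  have hL : 0 < logRatio ε := hε.1.trans_le (le_logRatio hε.2)
  have hgap : s / δ * quantileGap ε δ ≤ quantileGap ε s :=
    calc s / δ * quantileGap ε δ
        = (1 - ε) * (s / 2) * Real.exp (-(logRatio ε / δ) ^ 2 / 4 - 5) := by
          rw [quantileGap, min_eq_right (hδs.trans hs)]
          field_simp
      _ ≤ (1 - ε) * (s / 2) * Real.exp (-(logRatio ε / s) ^ 2 / 4 - 5) := by gcongr
      _ = quantileGap ε s := by rw [quantileGap, min_eq_right hs]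
  have hsq := pow_le_pow_left₀
    (mul_nonneg (by positivity) (quantileGap_nonneg hε.2.le hδ.le)) hgap 2
  rw [mul_pow] at hsq
  unfold quantileRate
  linarith

end QuantileRate

section MeanEstimable

/-- From `n` samples, one measurable estimator finds the mean of every `ε`-corrupted
unit-variance Gaussian to within `δ` with probability at least `p`. -/
def MeanEstimable (ε δ p : ℝ) (n : ℕ) : Prop :=
  ∃ A : (Fin n → Option ℝ) → ℝ, Measurable A ∧ ∀ (μ : ℝ) (Q : Measure (Option ℝ)),
    IsCorruptedVersion ε (fun x ↦ gaussPDF (x - μ)) Q →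
    p ≤ (Measure.pi fun _ : Fin n ↦ Q).real {v | |A v - μ| ≤ δ}

lemma measurable_getD_zero : Measurable fun o : Option ℝ ↦ o.getD 0 := fun _ hS ↦ hS

/- The event is that the sample `o` falls in a window of radius `δ / s` whose centre is at distance
at most `1` from `m`. -/
lemma IsCorruptedVersion.le_measureReal_abs_mul_add_mul_sub_le {ε a m s δ : ℝ}
    {Q : Measure (Option ℝ)} (hQ : IsCorruptedVersion ε (fun x ↦ gaussPDF (x - m)) Q)
    (hε : ε ≤ 1) (ha : |a - m| ≤ s) (hδ : 0 < δ) (hδs : δ ≤ s) (hs : s ≤ 1) :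
    (1 - ε) * (2 * (δ / s) * Real.exp (-3)) ≤
      Q.real {o | |(1 - s) * a + s * o.getD 0 - m| ≤ δ} := by
  have := hQ.1
  have hs0 : 0 < s := hδ.trans_le hδs
  set c := (m - (1 - s) * a) / s with hc
  have hcm : |c - m| ≤ 1 := by
    rw [hc, show (m - (1 - s) * a) / s - m = (1 - s) * (m - a) / s by field_simp; ring,
      abs_div, abs_mul, abs_of_nonneg (sub_nonneg.2 hs), abs_of_pos hs0, div_le_one hs0,
      abs_sub_comm]
    nlinarith
  refine (hQ.le_measureReal_image_some_Icc hε hcm (by positivity)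
    ((div_le_one hs0).2 hδs)).trans (measureReal_mono ?_)
  rintro _ ⟨x, hx, rfl⟩
  have hxc : |x - c| ≤ δ / s :=
    abs_sub_le_iff.2 ⟨sub_le_iff_le_add'.2 hx.2, sub_le_comm.1 hx.1⟩
  change |(1 - s) * a + s * x - m| ≤ δ
  calc |(1 - s) * a + s * x - m| = |s * (x - c)| := by
        rw [hc]
        congr 1
        field_simp
        ring
    _ = s * |x - c| := by rw [abs_mul, abs_of_pos hs0]
    _ ≤ s * (δ / s) := by gcongr
    _ = δ := mul_div_cancel₀ δ hs0.ne'

namespace MeanEstimable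

variable {ε δ s p p' : ℝ} {n k : ℕ}

lemma mono (h : MeanEstimable ε δ p n) (hp : p' ≤ p) : MeanEstimable ε δ p' n := by
  obtain ⟨A, hA, hprob⟩ := h
  exact ⟨A, hA, fun μ Q hQ ↦ hp.trans (hprob μ Q hQ)⟩

lemma of_quantile (hε : ε ∈ Set.Ioo 0 1) (hs : 0 < s) (n : ℕ) :
    MeanEstimable ε s (1 - 2 * Real.exp (-(quantileRate ε s * n))) n := by
  set y := quantileShift ε s
  set q := ((1 - ε) * gaussTail (y - s) + gaussTail (y + s)) / 2 with hq
  refine ⟨fun v ↦ upperQuantile q v - y, (measurable_upperQuantile q).sub_const y,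
    fun μ Q hQ ↦ ?_⟩
  have := hQ.1
  have hgap_nonneg := quantileGap_nonneg hε.2.le hs.le
  have hgap : quantileGap ε s ≤ (1 - ε) * gaussTail (y - s) - gaussTail (y + s) :=
    quantileGap_le hε hs
  have hlow := (hQ.measureReal_image_some_Ioi_mem_Icc hε.2.le (y - s)).1
  have hhigh := (hQ.measureReal_image_some_Ioi_mem_Icc hε.2.le (y + s)).2
  have hquantile : 1 - 2 * Real.exp (-(2 * Fintype.card (Fin n) * (quantileGap ε s / 2) ^ 2)) ≤
      (Measure.pi fun _ : Fin n ↦ Q).real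
        {v | upperQuantile q v ∈ Set.Icc (μ + (y - s)) (μ + (y + s))} :=
    le_measureReal_upperQuantile_mem_Icc Q (by linarith) (by linarith) (by linarith)
  convert hquantile using 4
  · rw [Fintype.card_fin, quantileRate]
    ring
  · simp only [abs_le, Set.mem_Icc]
    constructor <;> rintro ⟨h₁, h₂⟩ <;> constructor <;> linarith

lemma of_one_sample (hε : ε ≤ 1) (hδ : 0 ≤ δ) (hn : 0 < n) :
    MeanEstimable ε δ ((1 - ε) * (2 * min 1 δ * Real.exp (-3))) n := by
  set i : Fin n := ⟨0, hn⟩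
  refine ⟨fun v ↦ (v i).getD 0, measurable_getD_zero.comp (measurable_pi_apply i),
    fun μ Q hQ ↦ ?_⟩
  have := hQ.1
  have hS : MeasurableSet {o : Option ℝ | |o.getD 0 - μ| ≤ δ} :=
    measurableSet_le (measurable_getD_zero.sub_const μ).abs measurable_const
  calc (1 - ε) * (2 * min 1 δ * Real.exp (-3))
      ≤ Q.real (some '' Set.Icc (μ - min 1 δ) (μ + min 1 δ)) :=
        hQ.le_measureReal_image_some_Icc hε (by simp) (le_min zero_le_one hδ) (min_le_left _ _)
    _ ≤ Q.real {o | |o.getD 0 - μ| ≤ δ} := by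
        refine measureReal_mono ?_
        rintro _ ⟨x, hx, rfl⟩
        exact (abs_sub_le_iff.2 ⟨sub_le_iff_le_add'.2 hx.2, sub_le_comm.1 hx.1⟩).trans
          (min_le_right 1 δ)
    _ = (Measure.pi fun _ : Fin n ↦ Q).real {v | |(v i).getD 0 - μ| ≤ δ} :=
        ((measurePreserving_eval (fun _ ↦ Q) i).measureReal_preimage hS.nullMeasurableSet).symm

/- The new estimator is `(1 - s) * A + s * x`, with `A` the given one and `x` an extra sample. -/
lemma shrink (hε : ε ≤ 1) (hs : s ≤ 1) (hδ : 0 < δ) (hδs : δ ≤ s) (h : MeanEstimable ε s p k) :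
    MeanEstimable ε δ ((1 - ε) * (2 * (δ / s) * Real.exp (-3)) * p) (k + 1) := by
  obtain ⟨A, hA, hprob⟩ := h
  have hs0 : 0 < s := hδ.trans_le hδs
  have hc : 0 ≤ (1 - ε) * (2 * (δ / s) * Real.exp (-3)) :=
    mul_nonneg (sub_nonneg.2 hε) (by positivity)
  set B : Option ℝ × (Fin k → Option ℝ) → ℝ := fun x ↦ (1 - s) * A x.2 + s * x.1.getD 0
  have hB : Measurable B :=
    ((hA.comp measurable_snd).const_mul _).add
      ((measurable_getD_zero.comp measurable_fst).const_mul _)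
  have hsplit : Measurable fun v : Fin (k + 1) → Option ℝ ↦ (v 0, Fin.tail v) :=
    (measurable_pi_apply 0).prodMk (measurable_pi_lambda _ fun j ↦ measurable_pi_apply j.succ)
  refine ⟨fun v ↦ B (v 0, Fin.tail v), hB.comp hsplit, fun μ Q hQ ↦ ?_⟩
  have := hQ.1
  have hS : MeasurableSet {x | |B x - μ| ≤ δ} :=
    measurableSet_le (hB.sub_const μ).abs measurable_const
  have hE : MeasurableSet {w | |A w - μ| ≤ s} :=
    measurableSet_le (hA.sub_const μ).abs measurable_const
  have hwindow : ∀ w ∈ {w | |A w - μ| ≤ s},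
      (1 - ε) * (2 * (δ / s) * Real.exp (-3)) ≤ Q.real {x | (x, w) ∈ {x | |B x - μ| ≤ δ}} :=
    fun w hw ↦ hQ.le_measureReal_abs_mul_add_mul_sub_le hε hw hδ hδs hs
  calc (1 - ε) * (2 * (δ / s) * Real.exp (-3)) * p
      ≤ (1 - ε) * (2 * (δ / s) * Real.exp (-3)) *
          (Measure.pi fun _ : Fin k ↦ Q).real {w | |A w - μ| ≤ s} := by
        gcongr
        exact hprob μ Q hQ
    _ ≤ (Q.prod (Measure.pi fun _ : Fin k ↦ Q)).real {x | |B x - μ| ≤ δ} :=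
        mul_measureReal_le_measureReal_prod hS hE hc hwindow
    _ = (Measure.pi fun _ : Fin (k + 1) ↦ Q).real {v | |B (v 0, Fin.tail v) - μ| ≤ δ} :=
        (measureReal_pi_succ_eq_measureReal_prod Q k hS).symm

lemma half_of_two_le (hε : ε ∈ Set.Ioo 0 1) (hs : 0 < s) (hn : 2 ≤ quantileRate ε s * n) :
    MeanEstimable ε s (1 / 2) n := by
  refine (of_quantile hε hs n).mono ?_
  have hexp : Real.exp (-(quantileRate ε s * n)) ≤ 4⁻¹ := by
    rw [Real.exp_neg]
    gcongr
    nlinarith [Real.quadratic_le_exp_of_nonneg (zero_le_two.trans hn)]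
  linarith

/- Accuracy `s = 4 * δ / (quantileRate ε δ * n)` is reached with probability `1 / 2` from `n - 1`
samples, because `quantileRate` grows at least quadratically with the accuracy. -/
lemma of_min_one_lt (hε : ε ∈ Set.Ioo 0 1) (hδ : 0 < δ) (hn : quantileRate ε δ * n ≤ 4)
    (hδn : min 1 δ < quantileRate ε δ * n / 4) :
    MeanEstimable ε δ ((1 - ε) * (Real.exp (-3) / 4) * (quantileRate ε δ * n)) n := by
  set r := quantileRate ε δ * n with hr
  have hr0 : 0 < r := by linarith [lt_min one_pos hδ]
  have hδr : δ < r / 4 := (min_lt_iff.1 hδn).resolve_left (by linarith)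
  set s := 4 * δ / r with hs
  have hδs : δ ≤ s := by rw [hs, le_div_iff₀ hr0]; nlinarith
  have hs1 : s ≤ 1 := by rw [hs, div_le_one hr0]; linarith
  have hs0 : 0 < s := hδ.trans_le hδs
  have hrate : 4 ≤ quantileRate ε s * n :=
    calc (4 : ℝ) ≤ 16 / r := by rw [le_div_iff₀ hr0]; linarith
      _ = (s / δ) ^ 2 * r := by rw [hs]; field_simp; norm_num
      _ ≤ quantileRate ε s * n := by
        rw [hr, ← mul_assoc]
        gcongr
        exact div_sq_mul_quantileRate_le hε hδ hδs hs1
  have hrate_le := quantileRate_le_one hε hs0.le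
  obtain _ | k := n
  · norm_num at hrate
  have hhalf : MeanEstimable ε s (1 / 2) k := half_of_two_le hε hs0 (by
    push_cast at hrate
    linarith)
  convert hhalf.shrink hε.2.le hs1 hδ hδs using 1
  rw [hs]
  field_simp

lemma of_quantileRate_mul_le (hε : ε ∈ Set.Ioo 0 1) (hδ : 0 < δ) (hn0 : 0 < n)
    (hn : quantileRate ε δ * n ≤ 4) :
    MeanEstimable ε δ ((1 - ε) * (Real.exp (-3) / 4) * (quantileRate ε δ * n)) n := by
  rcases lt_or_ge (min 1 δ) (quantileRate ε δ * n / 4) with hδn | hδn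
  · exact of_min_one_lt hε hδ hn hδn
  refine (of_one_sample hε.2.le hδ.le hn0).mono ?_
  rw [mul_assoc]
  refine mul_le_mul_of_nonneg_left ?_ (sub_nonneg.2 hε.2.le)
  have hmin : 0 < min 1 δ := lt_min one_pos hδ
  nlinarith [Real.exp_pos (-3)]

theorem one_sub_exp (hε : ε ∈ Set.Ioo 0 1) (hδ : 0 < δ) (hn : 0 < n) :
    MeanEstimable ε δ
      (1 - Real.exp (-((1 - ε) * (Real.exp (-3) / 4) * (quantileRate ε δ * n)))) n := by
  set r := quantileRate ε δ * n
  rcases le_total r 4 with hr | hr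
  · exact (of_quantileRate_mul_le hε hδ hn hr).mono
      (sub_le_comm.1 (Real.one_sub_le_exp_neg _))
  refine (of_quantile hε hδ n).mono ?_
  change 1 - _ ≤ 1 - 2 * Real.exp (-r)
  have hconst : (1 - ε) * (Real.exp (-3) / 4) ≤ 1 / 4 := by
    have : Real.exp (-3) ≤ 1 := Real.exp_le_one_iff.2 (by norm_num)
    nlinarith [hε.1, Real.exp_pos (-3)]
  have : 2 * Real.exp (-r) ≤ Real.exp (-((1 - ε) * (Real.exp (-3) / 4) * r)) :=
    calc 2 * Real.exp (-r) ≤ Real.exp 1 * Real.exp (-r) := by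
          gcongr
          linarith [Real.add_one_le_exp 1]
      _ = Real.exp (1 - r) := by rw [← Real.exp_add, sub_eq_add_neg]
      _ ≤ _ := by
          rw [Real.exp_le_exp]
          nlinarith
  linarith

end MeanEstimable

end MeanEstimable

section SampleComplexity

variable {ε δ : ℝ}

lemma le_min_one_mul_logRatio_div (hε : ε < 1) (hδ : 0 < δ)
    (hδL : δ ^ 2 ≤ logRatio ε) : ε ≤ min 1 δ * (logRatio ε / δ) := by
  rcases le_total 1 δ with h | h
  · rw [min_eq_left h, one_mul, le_div_iff₀ hδ]
    nlinarith
  · rw [min_eq_right h, mul_div_cancel₀ _ hδ.ne']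
    exact le_logRatio hε

lemma exp_neg_sq_logRatio_div_le (hε : ε < 1) (hδ : 0 < δ)
    (hδL : δ ^ 2 ≤ logRatio ε) : Real.exp (-(logRatio ε / δ) ^ 2) ≤ 1 - ε := by
  rw [← exp_neg_logRatio hε, Real.exp_le_exp, neg_le_neg_iff, div_pow,
    le_div_iff₀ (by positivity)]
  nlinarith [sq_nonneg δ]

lemma sq_mul_exp_neg_mul_sq_le {c : ℝ} (hc : 0 < c) (u : ℝ) :
    u ^ 2 * Real.exp (-(c * u ^ 2)) ≤ Real.exp (-1) / c := by
  rw [le_div_iff₀ hc]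
  linarith [Real.mul_exp_neg_le_exp_neg_one (c * u ^ 2)]

/- The constant is `2 + 1 / 2 + 32 * exp 12`: two factors `exp (-u ^ 2)` are bounded by `1 - ε`,
one factor `exp (-u ^ 2 / 2)` occurs in `quantileRate`, and the rest absorbs `u ^ 2`. -/
lemma sq_mul_exp_neg_le_quantileRate (hε : ε ∈ Set.Ioo 0 1) (hδ : 0 < δ)
    (hδL : δ ^ 2 ≤ logRatio ε) :
    ε ^ 2 * Real.exp (-((32 * Real.exp 12 + 5 / 2) * (logRatio ε / δ) ^ 2)) ≤
      Real.exp (-3) / 4 * quantileRate ε δ := by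
  set u := logRatio ε / δ with hu
  have hεu := le_min_one_mul_logRatio_div hε.2 hδ hδL
  have hexp := exp_neg_sq_logRatio_div_le hε.2 hδ hδL
  rw [← hu] at hεu hexp
  calc ε ^ 2 * Real.exp (-((32 * Real.exp 12 + 5 / 2) * u ^ 2))
      ≤ (min 1 δ * u) ^ 2 * Real.exp (-((32 * Real.exp 12 + 5 / 2) * u ^ 2)) := by
        gcongr
        exact hε.1.le
    _ = (Real.exp (-u ^ 2) * min 1 δ) ^ 2 * Real.exp (-u ^ 2 / 2) *
          (u ^ 2 * Real.exp (-(32 * Real.exp 12 * u ^ 2))) := by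
        rw [show -((32 * Real.exp 12 + 5 / 2) * u ^ 2) =
          -u ^ 2 + -u ^ 2 + -u ^ 2 / 2 + -(32 * Real.exp 12 * u ^ 2) by ring]
        simp only [Real.exp_add]
        ring
    _ ≤ ((1 - ε) * min 1 δ) ^ 2 * Real.exp (-u ^ 2 / 2) * (Real.exp (-1) / (32 * Real.exp 12)) := by
        gcongr
        exact sq_mul_exp_neg_mul_sq_le (by positivity) u
    _ = Real.exp (-3) / 4 * quantileRate ε δ := by
        have hsq : Real.exp (-u ^ 2 / 4 - 5) ^ 2 = Real.exp (-u ^ 2 / 2) * Real.exp (-10) := by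
          rw [← Real.exp_nat_mul, ← Real.exp_add]
          congr 1
          push_cast
          ring
        have hconst : Real.exp (-1) / (32 * Real.exp 12) =
            Real.exp (-3) * Real.exp (-10) / 32 := by
          rw [← Real.exp_add, mul_comm, ← div_div, ← Real.exp_sub]
          norm_num
        rw [quantileRate, quantileGap, ← hu, mul_pow _ (Real.exp (_ - 5)), hsq, hconst]
        ring

lemma exp_neg_mul_le_of_log_le {a b n τ : ℝ} (hτ : 0 < τ) (hn : 0 ≤ n) (ha : 0 < a)
    (hab : a ≤ b) (h : Real.log (1 / τ) / a ≤ n) : Real.exp (-(b * n)) ≤ τ := by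
  rw [← Real.le_log_iff_exp_le hτ, neg_le, ← Real.log_inv, ← one_div]
  exact ((div_le_iff₀' ha).1 h).trans (mul_le_mul_of_nonneg_right hab hn)

end SampleComplexity

/-- Sample complexity upper bound (one dimension): there is an absolute constant `C > 0`
such that for all `ε ∈ (0,1)`, `δ ∈ (0, √log(1 + ε/(1−ε)))`, `τ ∈ (0,1)` and
`n ≥ exp(C·((1/δ)·log(1 + ε/(1−ε)))²)·log(1/τ)/(ε²(1−ε))`, there exists an estimator on
`n` samples which, for every `μ` and every `ε`-corrupted version `Q` of `N(μ,1)`,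
estimates `μ` to within `δ` with probability at least `1 − τ` under `Q^⊗n`. -/
theorem stmt11 :
    ∃ C : ℝ, 0 < C ∧
      ∀ (ε δ τ : ℝ) (n : ℕ),
        ε ∈ Set.Ioo (0 : ℝ) 1 →
        δ ∈ Set.Ioo 0 (Real.sqrt (Real.log (1 + ε / (1 - ε)))) →
        τ ∈ Set.Ioo (0 : ℝ) 1 → 0 < n →
        (n : ℝ) ≥ Real.exp (C * ((1 / δ) * Real.log (1 + ε / (1 - ε))) ^ 2) *
            Real.log (1 / τ) / (ε ^ 2 * (1 - ε)) →
        ∃ A : (Fin n → Option ℝ) → ℝ, Measurable A ∧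
          ∀ (μ : ℝ) (Q : Measure (Option ℝ)),
            IsCorruptedVersion ε (fun x => gaussPDF (x - μ)) Q →
            ((Measure.pi fun _ : Fin n => Q) {v | |A v - μ| ≤ δ}).toReal ≥ 1 - τ := by
  refine ⟨32 * Real.exp 12 + 5 / 2, by positivity, fun ε δ τ n hε hδ hτ hn hsize ↦ ?_⟩
  set D := Real.exp ((32 * Real.exp 12 + 5 / 2) * (logRatio ε / δ) ^ 2) with hD
  have hδL : δ ^ 2 ≤ logRatio ε := ((Real.lt_sqrt hδ.1.le).1 hδ.2).le
  have hε' : 0 < 1 - ε := sub_pos.2 hε.2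
  have hrate := sq_mul_exp_neg_le_quantileRate hε hδ.1 hδL
  refine (MeanEstimable.one_sub_exp hε hδ.1 hn).mono (sub_le_sub_left ?_ 1)
  rw [← mul_assoc]
  refine exp_neg_mul_le_of_log_le (a := ε ^ 2 * (1 - ε) / D) hτ.1 n.cast_nonneg
    (div_pos (mul_pos (pow_pos hε.1 2) hε') (Real.exp_pos _)) ?_ ?_
  · rw [Real.exp_neg, ← hD] at hrate
    calc ε ^ 2 * (1 - ε) / D = (1 - ε) * (ε ^ 2 * D⁻¹) := by ring
      _ ≤ (1 - ε) * (Real.exp (-3) / 4 * quantileRate ε δ) := by gcongr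
      _ = (1 - ε) * (Real.exp (-3) / 4) * quantileRate ε δ := (mul_assoc _ _ _).symm
  · convert hsize using 1
    rw [div_div_eq_mul_div, hD, logRatio, one_div_mul_eq_div, mul_comm]
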